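/- Let n ≥ 0, assume the hypotheses guaranteeing that Q_n : ℓ²_{w'} → ℓ²_w is a bounded operator with D_n Q_n = I, and assume additionally that Σ_{k=0}^∞ w(k)|h^{(n)}(k)|² = ∞ (so the kernel of D_n in ℓ²_w is trivial). Then Q_n D_n f = f for every f ∈ dom(D_n) = {f ∈ ℓ²_w : D_n f ∈ ℓ²_{w'}}; hence Q_n is a two-sided inverse of D_n. -/

import Mathlib

/-- The difference operator `D_n` on sequences. -/
noncomputable def Dn (β μ : ℕ → ℂ) (n : ℕ) (f : ℕ → ℂ) (k : ℕ) : ℂ :=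
  β (k + n) * f k - β k * (μ (k + 1) / μ k) * f (k + 1)

/-- The formal kernel vector `h^{(n)}(k) = (∏_{i=0}^{n-1} β(k+i)) / μ(k)`. -/
noncomputable def hker (β μ : ℕ → ℂ) (n : ℕ) (k : ℕ) : ℂ :=
  (∏ i ∈ Finset.range n, β (k + i)) / μ k

/-- The integral kernel of the operator `Q_n`. -/
noncomputable def Qker (β μ : ℕ → ℂ) (n : ℕ) (k j : ℕ) : ℂ :=
  (∏ i ∈ Finset.range n, β (k + i)) / (∏ i ∈ Finset.range (n + 1), β (j + i)) *
    (μ j / μ k)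

/-- The operator `Q_n`: `(Q_n g)(k) = Σ_{j=k}^∞ K_n(k,j) g(j)`. -/
noncomputable def Qop (β μ : ℕ → ℂ) (n : ℕ) (g : ℕ → ℂ) (k : ℕ) : ℂ :=
  ∑' j : ℕ, if k ≤ j then Qker β μ n k j * g j else 0

/-- Membership in the weighted space `ℓ²_w`: `Σ_k w(k) |f(k)|² < ∞`. -/
def MemL2 (w : ℕ → ℝ) (f : ℕ → ℂ) : Prop :=
  Summable fun k => w k * ‖f k‖ ^ 2

/-!
With `h = hker β μ n` and `a = f / h`, the summands of the series for `Q_n D_n f` telescope: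
`Qker k j * (D_n f) j = h k * (a j - a (j + 1))`. Hence, as soon as these series converge,
`Q_n D_n f = f - L • h` with the single constant `L = lim a`. The bounds on `β`
dominate the kernel of `Q_n` by that of the assumed double series, which makes `Q_n` a
Hilbert–Schmidt operator from `ℓ²_{w'}` to `ℓ²_w`; so `L • h = f - Q_n D_n f` lies in `ℓ²_w`.
Since `h` does not, `L = 0`.
-/

section CauchySchwarz

variable {ι : Type*} {r u v : ι → ℝ}

theorem summable_of_sq_le_mul (hu : ∀ i, 0 ≤ u i) (hv : ∀ i, 0 ≤ v i)
    (hr : ∀ i, r i ^ 2 ≤ u i * v i) (hsu : Summable u) (hsv : Summable v) : Summable r := by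
  refine .of_norm_bounded (hsu.add hsv) fun i => abs_le_of_sq_le_sq ?_ (add_nonneg (hu i) (hv i))
  calc r i ^ 2 ≤ u i * v i := hr i
    _ ≤ (u i + v i) ^ 2 := by nlinarith [sq_nonneg (u i), sq_nonneg (v i), mul_nonneg (hu i) (hv i)]

theorem sq_tsum_le_tsum_mul_tsum_of_sq_le_mul (hu : ∀ i, 0 ≤ u i) (hv : ∀ i, 0 ≤ v i)
    (hr : ∀ i, r i ^ 2 ≤ u i * v i) (hsu : Summable u) (hsv : Summable v) :
    (∑' i, r i) ^ 2 ≤ (∑' i, u i) * ∑' i, v i :=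
  le_of_tendsto_of_tendsto' ((summable_of_sq_le_mul hu hv hr hsu hsv).hasSum.pow 2)
    (Filter.Tendsto.mul hsu.hasSum hsv.hasSum) fun s =>
      s.sum_sq_le_sum_mul_sum_of_sq_le_mul (fun i _ => hu i) (fun i _ => hv i) fun i _ => hr i

end CauchySchwarz

section HilbertSchmidt

variable {ι κ R : Type*} [NormedRing R] {w : ι → ℝ} {v : κ → ℝ}

theorem sq_norm_mul_le_div_mul_mul {c : ℝ} (hc : 0 < c) (x y : R) :
    ‖x * y‖ ^ 2 ≤ ‖x‖ ^ 2 / c * (c * ‖y‖ ^ 2) :=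
  calc ‖x * y‖ ^ 2 ≤ (‖x‖ * ‖y‖) ^ 2 := by gcongr; exact norm_mul_le x y
    _ = ‖x‖ ^ 2 / c * (c * ‖y‖ ^ 2) := by field_simp

theorem summable_norm_mul_of_weighted_sq (hv : ∀ j, 0 < v j) {a g : κ → R}
    (ha : Summable fun j => ‖a j‖ ^ 2 / v j) (hg : Summable fun j => v j * ‖g j‖ ^ 2) :
    Summable fun j => ‖a j * g j‖ :=
  summable_of_sq_le_mul (fun j => div_nonneg (sq_nonneg _) (hv j).le)
    (fun j => mul_nonneg (hv j).le (sq_nonneg _))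
    (fun j => sq_norm_mul_le_div_mul_mul (hv j) (a j) (g j)) ha hg

theorem sq_norm_tsum_mul_le (hv : ∀ j, 0 < v j) {a g : κ → R}
    (ha : Summable fun j => ‖a j‖ ^ 2 / v j) (hg : Summable fun j => v j * ‖g j‖ ^ 2) :
    ‖∑' j, a j * g j‖ ^ 2 ≤ (∑' j, ‖a j‖ ^ 2 / v j) * ∑' j, v j * ‖g j‖ ^ 2 :=
  calc ‖∑' j, a j * g j‖ ^ 2 ≤ (∑' j, ‖a j * g j‖) ^ 2 := by
        gcongr
        exact norm_tsum_le_tsum_norm (summable_norm_mul_of_weighted_sq hv ha hg)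
    _ ≤ (∑' j, ‖a j‖ ^ 2 / v j) * ∑' j, v j * ‖g j‖ ^ 2 :=
        sq_tsum_le_tsum_mul_tsum_of_sq_le_mul (fun j => div_nonneg (sq_nonneg _) (hv j).le)
          (fun j => mul_nonneg (hv j).le (sq_nonneg _))
          (fun j => sq_norm_mul_le_div_mul_mul (hv j) (a j) (g j)) ha hg

/-- The Hilbert–Schmidt condition on a kernel `K`, regarded as an operator
`(K g) i = ∑' j, K i j * g j` from `ℓ²_v` to `ℓ²_w`. -/
def IsHilbertSchmidt (w : ι → ℝ) (v : κ → ℝ) (K : ι → κ → R) : Prop :=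
  Summable fun p : ι × κ => w p.1 * (‖K p.1 p.2‖ ^ 2 / v p.2)

namespace IsHilbertSchmidt

variable {K : ι → κ → R} {g : κ → R}

theorem summable_row (hK : IsHilbertSchmidt w v K) (hw : ∀ i, 0 < w i) (i : ι) :
    Summable fun j => ‖K i j‖ ^ 2 / v j :=
  (summable_mul_left_iff (hw i).ne').1 (hK.prod_factor i)

theorem summable_mul [CompleteSpace R] (hK : IsHilbertSchmidt w v K) (hw : ∀ i, 0 < w i)
    (hv : ∀ j, 0 < v j) (hg : Summable fun j => v j * ‖g j‖ ^ 2) (i : ι) :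
    Summable fun j => K i j * g j :=
  (summable_norm_mul_of_weighted_sq hv (hK.summable_row hw i) hg).of_norm

theorem summable_sq_norm_tsum (hK : IsHilbertSchmidt w v K) (hw : ∀ i, 0 < w i)
    (hv : ∀ j, 0 < v j) (hg : Summable fun j => v j * ‖g j‖ ^ 2) :
    Summable fun i => w i * ‖∑' j, K i j * g j‖ ^ 2 := by
  refine .of_nonneg_of_le (fun i => mul_nonneg (hw i).le (sq_nonneg _)) (fun i => ?_)
    (hK.prod.mul_right (∑' j, v j * ‖g j‖ ^ 2))
  calc w i * ‖∑' j, K i j * g j‖ ^ 2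
      ≤ w i * ((∑' j, ‖K i j‖ ^ 2 / v j) * ∑' j, v j * ‖g j‖ ^ 2) :=
        mul_le_mul_of_nonneg_left (sq_norm_tsum_mul_le hv (hK.summable_row hw i) hg) (hw i).le
    _ = (∑' j, w i * (‖K i j‖ ^ 2 / v j)) * ∑' j, v j * ‖g j‖ ^ 2 := by
        rw [tsum_mul_left, mul_assoc]

end IsHilbertSchmidt

end HilbertSchmidt

theorem memL2_iff_memℓp {w : ℕ → ℝ} {f : ℕ → ℂ} (hw : ∀ k, 0 ≤ w k) :
    MemL2 w f ↔ Memℓp (fun k => (√(w k) : ℂ) * f k) 2 := by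
  rw [memℓp_gen_iff (by simp)]
  refine summable_congr fun k => ?_
  simp [mul_pow, Real.sq_sqrt (hw k)]

namespace MemL2

variable {w : ℕ → ℝ} {f g : ℕ → ℂ}

theorem sub (hw : ∀ k, 0 ≤ w k) (hf : MemL2 w f) (hg : MemL2 w g) :
    MemL2 w fun k => f k - g k := by
  rw [memL2_iff_memℓp hw] at hf hg ⊢
  simpa only [mul_sub] using! hf.sub hg

theorem const_mul (hf : MemL2 w f) (c : ℂ) : MemL2 w fun k => c * f k :=
  (hf.mul_left (‖c‖ ^ 2)).congr fun k => by rw [norm_mul]; ring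

end MemL2

section Telescoping

variable {E : Type*} [AddCommGroup E] [TopologicalSpace E] [IsTopologicalAddGroup E]

theorem exists_hasSum_tail_sub_succ {a : ℕ → E} (ha : Summable fun j => a j - a (j + 1)) :
    ∃ L, ∀ k, HasSum (fun j => if k ≤ j then a j - a (j + 1) else 0) (a k - L) := by
  refine ⟨a 0 - ∑' j, (a j - a (j + 1)), fun k => ?_⟩
  have hinit : HasSum (fun j => if k ≤ j then 0 else a j - a (j + 1)) (a 0 - a k) := by
    rw [← Finset.sum_range_sub', Finset.sum_congr rfl fun j hj =>
      (if_neg (Finset.mem_range.1 hj).not_ge).symm]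
    exact hasSum_sum_of_ne_finset_zero fun j hj => if_pos (by simpa using hj)
  convert ha.hasSum.sub hinit using 1
  · ext j
    split_ifs <;> simp
  · abel

end Telescoping

section Operators

variable {β μ : ℕ → ℂ} {n : ℕ}

theorem prod_shift_ne_zero (hβ : ∀ k, β k ≠ 0) (n k : ℕ) :
    ∏ i ∈ Finset.range n, β (k + i) ≠ 0 :=
  Finset.prod_ne_zero_iff.2 fun _ _ => hβ _

theorem prod_shift_mul_eq (β : ℕ → ℂ) (n k : ℕ) :
    (∏ i ∈ Finset.range n, β (k + i)) * β (k + n) =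
      (∏ i ∈ Finset.range n, β (k + 1 + i)) * β k := by
  rw [← Finset.prod_range_succ (fun i => β (k + i)), Finset.prod_range_succ']
  simp only [add_zero, add_assoc, add_comm 1]

theorem hker_ne_zero (hβ : ∀ k, β k ≠ 0) (hμ : ∀ k, μ k ≠ 0) (n k : ℕ) : hker β μ n k ≠ 0 :=
  div_ne_zero (prod_shift_ne_zero hβ n k) (hμ k)

theorem Qker_mul_Dn (hβ : ∀ k, β k ≠ 0) (hμ : ∀ k, μ k ≠ 0) (n : ℕ) (f : ℕ → ℂ) (k j : ℕ) :
    Qker β μ n k j * Dn β μ n f j =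
      hker β μ n k * (f j / hker β μ n j - f (j + 1) / hker β μ n (j + 1)) := by
  have hPj := prod_shift_ne_zero hβ n j
  have hPj' := prod_shift_ne_zero hβ n (j + 1)
  have hμk := hμ k
  have hμj := hμ j
  have hβn := hβ (j + n)
  simp only [Qker, Dn, hker, Finset.prod_range_succ]
  field_simp
  linear_combination
    (∏ i ∈ Finset.range n, β (k + i)) * f (j + 1) * μ (j + 1) * prod_shift_mul_eq β n j

theorem exists_Qop_Dn_eq_sub (hβ : ∀ k, β k ≠ 0) (hμ : ∀ k, μ k ≠ 0) {f : ℕ → ℂ}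
    (hs : Summable fun j => Qker β μ n 0 j * Dn β μ n f j) :
    ∃ L : ℂ, ∀ k, Qop β μ n (Dn β μ n f) k = f k - L * hker β μ n k := by
  have hh := hker_ne_zero hβ hμ n
  simp only [Qker_mul_Dn hβ hμ, summable_mul_left_iff (hh 0)] at hs
  obtain ⟨L, hL⟩ := exists_hasSum_tail_sub_succ hs
  refine ⟨L, fun k => ?_⟩
  calc Qop β μ n (Dn β μ n f) k
      = hker β μ n k * (f k / hker β μ n k - L) := by
        simpa only [Qop, Qker_mul_Dn hβ hμ, mul_ite, mul_zero] using
          ((hL k).mul_left (hker β μ n k)).tsum_eq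
    _ = f k - L * hker β μ n k := by
        rw [mul_sub, mul_div_cancel₀ _ (hh k), mul_comm L]

/-- `Q_n` is defined on all of `ℓ²_v` and maps it into `ℓ²_w`. Convergence of the defining series is
demanded separately because `∑'` takes the value `0` on divergent series. -/
def QopMapsTo (β μ : ℕ → ℂ) (n : ℕ) (v w : ℕ → ℝ) : Prop :=
  ∀ g, MemL2 v g →
    (∀ k, Summable fun j => if k ≤ j then Qker β μ n k j * g j else 0) ∧ MemL2 w (Qop β μ n g)

theorem IsHilbertSchmidt.qopMapsTo {v w : ℕ → ℝ} (hw : ∀ k, 0 < w k) (hv : ∀ k, 0 < v k)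
    (hK : IsHilbertSchmidt w v fun k j => if k ≤ j then Qker β μ n k j else 0) :
    QopMapsTo β μ n v w := by
  refine fun g hg => ⟨?_, ?_⟩
  · simpa only [ite_mul, zero_mul] using hK.summable_mul hw hv hg
  · simpa only [MemL2, Qop, ite_mul, zero_mul] using hK.summable_sq_norm_tsum hw hv hg

theorem norm_prod_shift_le (hβ : β 0 ≠ 0) {M : ℝ}
    (hM : ∀ k j m : ℕ, k ≤ j →
      ‖∏ i ∈ Finset.range (m + 1), β (k + i)‖ ≤ M * ‖∏ i ∈ Finset.range (m + 1), β (j + i)‖)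
    (n : ℕ) {k j : ℕ} (hkj : k ≤ j) :
    ‖∏ i ∈ Finset.range n, β (k + i)‖ ≤ M * ‖∏ i ∈ Finset.range n, β (j + i)‖ := by
  cases n with
  | zero =>
    have hM1 : 1 ≤ M := by
      simpa only [zero_add, Finset.prod_range_one,
        le_mul_iff_one_le_left (norm_pos_iff.2 hβ)] using hM 0 0 0 le_rfl
    simpa using hM1
  | succ m => exact hM k j m hkj

theorem norm_Qker_le (hβ : ∀ k, β k ≠ 0) {M c : ℝ} (hc : 0 < c) {k j : ℕ}
    (hprod : ‖∏ i ∈ Finset.range n, β (k + i)‖ ≤ M * ‖∏ i ∈ Finset.range n, β (j + i)‖)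
    (hlow : c * (1 + j) ≤ ‖β (j + n)‖) :
    ‖Qker β μ n k j‖ ≤ M / c * (((j : ℝ) + 1)⁻¹ * ‖μ j / μ k‖) := by
  have hPj : 0 < ‖∏ i ∈ Finset.range n, β (j + i)‖ := norm_pos_iff.2 (prod_shift_ne_zero hβ n j)
  rw [Qker, norm_mul, Finset.prod_range_succ, norm_div, norm_mul, ← mul_assoc]
  gcongr
  calc ‖∏ i ∈ Finset.range n, β (k + i)‖ / (‖∏ i ∈ Finset.range n, β (j + i)‖ * ‖β (j + n)‖)
      ≤ M * ‖∏ i ∈ Finset.range n, β (j + i)‖ /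
        (‖∏ i ∈ Finset.range n, β (j + i)‖ * (c * (1 + j))) := by
        have := (norm_nonneg _).trans hprod
        gcongr
    _ = M / c * ((j : ℝ) + 1)⁻¹ := by
        field_simp
        ring

theorem isHilbertSchmidt_Qker {w v : ℕ → ℝ} (hw : ∀ k, 0 ≤ w k) (hv : ∀ k, 0 ≤ v k) {C : ℝ}
    (hbound : ∀ k j, k ≤ j → ‖Qker β μ n k j‖ ≤ C * (((j : ℝ) + 1)⁻¹ * ‖μ j / μ k‖))
    (hsum : Summable fun p : ℕ × ℕ =>
      ((max p.2 p.1 : ℝ) + 1)⁻¹ ^ 2 * ‖μ p.2 / μ p.1‖ ^ 2 * (w p.1 / v p.2)) :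
    IsHilbertSchmidt w v fun k j => if k ≤ j then Qker β μ n k j else 0 := by
  refine .of_nonneg_of_le
    (fun p => mul_nonneg (hw p.1) (div_nonneg (sq_nonneg _) (hv p.2))) (fun ⟨k, j⟩ => ?_)
    (hsum.mul_left (C ^ 2))
  by_cases hkj : k ≤ j
  · have hmax : (max j k : ℝ) = j := max_eq_left (mod_cast hkj)
    simp only [if_pos hkj, hmax]
    calc w k * (‖Qker β μ n k j‖ ^ 2 / v j)
        ≤ w k * ((C * (((j : ℝ) + 1)⁻¹ * ‖μ j / μ k‖)) ^ 2 / v j) := by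
          have := hw k
          have := hv j
          gcongr
          exact hbound k j hkj
      _ = C ^ 2 * (((j : ℝ) + 1)⁻¹ ^ 2 * ‖μ j / μ k‖ ^ 2 * (w k / v j)) := by ring
  · have hright : 0 ≤ ((max j k : ℝ) + 1)⁻¹ ^ 2 * ‖μ j / μ k‖ ^ 2 * (w k / v j) :=
      mul_nonneg (by positivity) (div_nonneg (hw k) (hv j))
    simpa only [if_neg hkj, norm_zero, zero_pow two_ne_zero, zero_div, mul_zero] using
      mul_nonneg (sq_nonneg C) hright

theorem qopMapsTo_of_bounds {w v : ℕ → ℝ} (hw : ∀ k, 0 < w k) (hv : ∀ k, 0 < v k)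
    (hβ : ∀ k, β k ≠ 0) {M c : ℝ} (hc : 0 < c)
    (hM : ∀ k j m : ℕ, k ≤ j →
      ‖∏ i ∈ Finset.range (m + 1), β (k + i)‖ ≤ M * ‖∏ i ∈ Finset.range (m + 1), β (j + i)‖)
    (hβlow : ∀ k : ℕ, c * (1 + k) ≤ ‖β k‖)
    (hsum : Summable fun p : ℕ × ℕ =>
      ((max p.2 p.1 : ℝ) + 1)⁻¹ ^ 2 * ‖μ p.2 / μ p.1‖ ^ 2 * (w p.1 / v p.2)) (n : ℕ) :
    QopMapsTo β μ n v w := by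
  have hlow (j : ℕ) : c * (1 + j) ≤ ‖β (j + n)‖ :=
    le_trans (by gcongr; omega) (hβlow (j + n))
  have hbound (k j : ℕ) (hkj : k ≤ j) :
      ‖Qker β μ n k j‖ ≤ M / c * (((j : ℝ) + 1)⁻¹ * ‖μ j / μ k‖) :=
    norm_Qker_le hβ hc (norm_prod_shift_le (hβ 0) hM n hkj) (hlow j)
  exact (isHilbertSchmidt_Qker (fun k => (hw k).le) (fun k => (hv k).le) hbound hsum).qopMapsTo
    hw hv

end Operators

theorem statement5_general {w v : ℕ → ℝ} (hw : ∀ k, 0 ≤ w k) {β μ : ℕ → ℂ} (hβ : ∀ k, β k ≠ 0)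
    (hμ : ∀ k, μ k ≠ 0) {n : ℕ} (hQ : QopMapsTo β μ n v w) (hdiv : ¬ MemL2 w (hker β μ n))
    (f : ℕ → ℂ) (hf : MemL2 w f) (hDf : MemL2 v (Dn β μ n f)) (k : ℕ) :
    Qop β μ n (Dn β μ n f) k = f k := by
  obtain ⟨hconv, hmem⟩ := hQ _ hDf
  obtain ⟨L, hL⟩ := exists_Qop_Dn_eq_sub hβ hμ (by simpa using hconv 0)
  have hLh : MemL2 w fun k => L * hker β μ n k := by
    simpa only [hL, sub_sub_cancel] using hf.sub hw hmem
  have hL0 : L = 0 := by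
    by_contra hne
    exact hdiv (by simpa only [inv_mul_cancel_left₀ hne] using hLh.const_mul L⁻¹)
  rw [hL, hL0, zero_mul, sub_zero]

/-- under the hypotheses guaranteeing that `Q_n : ℓ²_{w'} → ℓ²_w` is
bounded with `D_n Q_n = I`, and assuming additionally `Σ_k w(k)|h^{(n)}(k)|² = ∞`
(so the kernel of `D_n` in `ℓ²_w` is trivial), we have `Q_n D_n f = f` for every
`f ∈ dom(D_n) = {f ∈ ℓ²_w : D_n f ∈ ℓ²_{w'}}`; hence `Q_n` is a two-sided inverse
of `D_n`. -/
theorem statement5 (w w' : ℕ → ℝ) (hw : ∀ k, 0 < w k) (hw' : ∀ k, 0 < w' k)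
    (β μ : ℕ → ℂ) (hβ : ∀ k, β k ≠ 0) (hμ : ∀ k, μ k ≠ 0) (hμ0 : μ 0 = 1)
    (M c : ℝ) (hc : 0 < c)
    (hM : ∀ k j m : ℕ, k ≤ j →
      ‖∏ i ∈ Finset.range (m + 1), β (k + i)‖ ≤
        M * ‖∏ i ∈ Finset.range (m + 1), β (j + i)‖)
    (hβlow : ∀ k : ℕ, c * (1 + k) ≤ ‖β k‖)
    (hsum : Summable fun p : ℕ × ℕ =>
      ((max p.2 p.1 : ℝ) + 1)⁻¹ ^ 2 * ‖μ p.2 / μ p.1‖ ^ 2 * (w p.1 / w' p.2))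
    (n : ℕ) (hdiv : ¬ MemL2 w (hker β μ n)) :
    ∀ f : ℕ → ℂ, MemL2 w f → MemL2 w' (Dn β μ n f) →
      ∀ k : ℕ, Qop β μ n (Dn β μ n f) k = f k :=
  statement5_general (fun k => (hw k).le) hβ hμ
    (qopMapsTo_of_bounds hw hw' hβ hc hM hβlow hsum n) hdiv
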